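/- For every prime p and every natural number n ≥ 1, the Chermak-Delgado measure of the mod pⁿ Heisenberg group satisfies m*(𝓗(pⁿ)) = p^{4n}; that is, the maximum of |H| · |C(H)| over all subgroups H of 𝓗(pⁿ) equals p^{4n}. -/

import Mathlib

theorem pc_mem_ker_iff {G K : Type*} [Group G] [Group K] (q : G →* K) (s g : G) :
    s⁻¹ * g⁻¹ * s * g ∈ q.ker ↔ Commute (q s) (q g) := by
  rw [MonoidHom.mem_ker]
  simp only [map_mul, map_inv]
  rw [mul_assoc, ← mul_inv_rev, inv_mul_eq_one, commute_iff_eq]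
  exact eq_comm

/-- The `q`-pseudocentralizer of a subset `S` of `G`:
all `g` such that `[s, g] = s⁻¹ * g⁻¹ * s * g ∈ ker q` for all `s ∈ S`. -/
def pseudocentralizer {G K : Type*} [Group G] [Group K] (q : G →* K) (S : Set G) :
    Subgroup G where
  carrier := {g : G | ∀ s ∈ S, s⁻¹ * g⁻¹ * s * g ∈ q.ker}
  one_mem' := fun s _ => by
    rw [pc_mem_ker_iff, map_one]
    exact Commute.one_right _
  mul_mem' := fun {a b} ha hb s hs => by
    rw [pc_mem_ker_iff, map_mul]
    exact ((pc_mem_ker_iff q s a).mp (ha s hs)).mul_right ((pc_mem_ker_iff q s b).mp (hb s hs))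
  inv_mem' := fun {a} ha s hs => by
    rw [pc_mem_ker_iff, map_inv]
    exact ((pc_mem_ker_iff q s a).mp (ha s hs)).inv_right

theorem mem_pseudocentralizer_iff {G K : Type*} [Group G] [Group K] {q : G →* K} {S : Set G}
    {g : G} : g ∈ pseudocentralizer q S ↔ ∀ s ∈ S, s⁻¹ * g⁻¹ * s * g ∈ q.ker := Iff.rfl

/-- The mod `r` Heisenberg group, as triples `(x, y, z)` over `ZMod r`. -/
@[ext]
structure Heis (r : ℕ) where
  x : ZMod r
  y : ZMod r
  z : ZMod r

namespace Heis

variable {r : ℕ}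

private def hmul (a b : Heis r) : Heis r := ⟨a.x + b.x, a.y + b.y + a.x * b.z, a.z + b.z⟩
private def hone : Heis r := ⟨0, 0, 0⟩
private def hinv (a : Heis r) : Heis r := ⟨-a.x, a.x * a.z - a.y, -a.z⟩

instance : Group (Heis r) where
  mul := hmul
  one := hone
  inv := hinv
  mul_assoc a b c := by
    show hmul (hmul a b) c = hmul a (hmul b c)
    ext <;> (dsimp [hmul]; ring)
  one_mul a := by
    show hmul hone a = a
    ext <;> (dsimp [hmul, hone]; ring)
  mul_one a := by
    show hmul a hone = a
    ext <;> (dsimp [hmul, hone]; ring)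
  inv_mul_cancel a := by
    show hmul (hinv a) a = hone
    ext <;> (dsimp [hmul, hinv, hone]; ring)

@[simp] theorem mul_x (a b : Heis r) : (a * b).x = a.x + b.x := rfl
@[simp] theorem mul_y (a b : Heis r) : (a * b).y = a.y + b.y + a.x * b.z := rfl
@[simp] theorem mul_z (a b : Heis r) : (a * b).z = a.z + b.z := rfl
@[simp] theorem one_x : (1 : Heis r).x = 0 := rfl
@[simp] theorem one_y : (1 : Heis r).y = 0 := rfl
@[simp] theorem one_z : (1 : Heis r).z = 0 := rfl
@[simp] theorem inv_x (a : Heis r) : (a⁻¹).x = -a.x := rfl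
@[simp] theorem inv_y (a : Heis r) : (a⁻¹).y = a.x * a.z - a.y := rfl
@[simp] theorem inv_z (a : Heis r) : (a⁻¹).z = -a.z := rfl

/-- Componentwise reduction `Heis r → Heis s` when `s ∣ r`. -/
def heisMap {r s : ℕ} (h : s ∣ r) : Heis r →* Heis s where
  toFun a := ⟨ZMod.castHom h (ZMod s) a.x, ZMod.castHom h (ZMod s) a.y, ZMod.castHom h (ZMod s) a.z⟩
  map_one' := by
    ext <;> simp only [one_x, one_y, one_z, map_zero]
  map_mul' a b := by
    ext <;> simp only [mul_x, mul_y, mul_z, map_add, map_mul]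

end Heis

/-- Componentwise reduction modulo `p ^ (n - 1)` from `Heis (p ^ n)` to `Heis (p ^ (n - 1))`. -/
def heisQ (p n : ℕ) : Heis (p ^ n) →* Heis (p ^ (n - 1)) :=
  Heis.heisMap (pow_dvd_pow p (Nat.sub_le n 1))

/-- Two additive subgroups that annihilate each other under a pairing into `ZMod r` which is
injective in the first variable have sizes whose product is at most that of the second group. -/
theorem card_mul_card_le_of_pairing_eq_zero {r : ℕ} [NeZero r] {U V : Type*} [AddCommGroup U]
    [AddCommGroup V] [Finite V] (ω : U →+ V →+ ZMod r) (hω : Function.Injective ω)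
    (A : AddSubgroup V) (B : AddSubgroup U) (h : ∀ a ∈ A, ∀ b ∈ B, ω b a = 0) :
    Nat.card A * Nat.card B ≤ Nat.card V := by
  have : Fintype (V ⧸ A) := Fintype.ofFinite _
  let f : B → AddChar (V ⧸ A) ℂ := fun b =>
    ZMod.stdAddChar.compAddMonoidHom
      (QuotientAddGroup.lift A (ω b) fun a ha => h a ha b b.2)
  have hf : Function.Injective f := fun b c hbc => by
    refine Subtype.ext (hω (AddMonoidHom.ext fun v => ?_))
    have := DFunLike.congr_fun hbc (v : V ⧸ A)
    exact ZMod.injective_stdAddChar this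
  have hB : Nat.card B ≤ Nat.card (V ⧸ A) := by
    have := Nat.card_le_card_of_injective f hf
    rwa [Nat.card_eq_fintype_card (α := AddChar _ _), AddChar.card_eq,
      ← Nat.card_eq_fintype_card] at this
  calc Nat.card A * Nat.card B ≤ Nat.card A * Nat.card (V ⧸ A) := Nat.mul_le_mul_left _ hB
    _ = Nat.card V := A.card_mul_index

namespace Heis

/-- `Heis r` as a type of triples. -/
def equivProd (r : ℕ) : Heis r ≃ (ZMod r × ZMod r) × ZMod r where
  toFun a := ((a.x, a.z), a.y)
  invFun v := ⟨v.1.1, v.2, v.1.2⟩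
  left_inv _ := rfl
  right_inv _ := rfl

instance (r : ℕ) [NeZero r] : Finite (Heis r) := Finite.of_equiv _ (equivProd r).symm

theorem card (r : ℕ) : Nat.card (Heis r) = r ^ 3 := by
  rw [Nat.card_congr (equivProd r), Nat.card_prod, Nat.card_prod, Nat.card_zmod]
  ring

theorem mul_comm_iff {r : ℕ} {a b : Heis r} : a * b = b * a ↔ a.x * b.z = b.x * a.z := by
  simp only [Heis.ext_iff, mul_x, mul_y, mul_z]
  constructor
  · rintro ⟨-, h, -⟩
    linear_combination h
  · exact fun h => ⟨by ring, by linear_combination h, by ring⟩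

/-- The image of a subgroup of `Heis r` in the abelianized coordinates `(x, z)`. -/
def shadow {r : ℕ} (H : Subgroup (Heis r)) : AddSubgroup (ZMod r × ZMod r) where
  carrier := (fun a : Heis r => (a.x, a.z)) '' H
  zero_mem' := ⟨1, H.one_mem, rfl⟩
  add_mem' := by
    rintro _ _ ⟨a, ha, rfl⟩ ⟨b, hb, rfl⟩
    exact ⟨a * b, H.mul_mem ha hb, rfl⟩
  neg_mem' := by
    rintro _ ⟨a, ha, rfl⟩
    exact ⟨a⁻¹, H.inv_mem ha, rfl⟩

theorem card_le_card_shadow_mul {r : ℕ} [NeZero r] (H : Subgroup (Heis r)) :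
    Nat.card H ≤ Nat.card (shadow H) * r := by
  let f : H → shadow H × ZMod r := fun a => (⟨(a.1.x, a.1.z), a, a.2, rfl⟩, a.1.y)
  have hf : Function.Injective f := fun a b hab => by
    have hxz := congrArg Subtype.val (congrArg Prod.fst hab)
    exact Subtype.ext (Heis.ext (congrArg Prod.fst hxz) (congrArg Prod.snd hab)
      (congrArg Prod.snd hxz))
  simpa [Nat.card_prod] using Nat.card_le_card_of_injective f hf

/-- The commutator pairing on the coordinates `(x, z)`. -/
def commPairing (r : ℕ) : ZMod r × ZMod r →+ ZMod r × ZMod r →+ ZMod r :=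
  AddMonoidHom.mk' (fun u => AddMonoidHom.mk' (fun v => u.1 * v.2 - v.1 * u.2)
    fun v w => by simp only [Prod.fst_add, Prod.snd_add]; ring)
    fun u v => AddMonoidHom.ext fun w => by
      simp only [AddMonoidHom.mk'_apply, AddMonoidHom.add_apply, Prod.fst_add, Prod.snd_add]
      ring

theorem commPairing_apply {r : ℕ} (u v : ZMod r × ZMod r) :
    commPairing r u v = u.1 * v.2 - v.1 * u.2 := rfl

theorem commPairing_injective (r : ℕ) : Function.Injective (commPairing r) := fun u v h => by
  have h₁ := DFunLike.congr_fun h (0, 1)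
  have h₂ := DFunLike.congr_fun h (1, 0)
  simp only [commPairing_apply, mul_one, mul_zero, zero_mul, one_mul, sub_zero, zero_sub,
    neg_inj] at h₁ h₂
  exact Prod.ext h₁ h₂

theorem card_mul_card_centralizer_le {r : ℕ} [NeZero r] (H : Subgroup (Heis r)) :
    Nat.card H * Nat.card (Subgroup.centralizer (H : Set (Heis r))) ≤ r ^ 4 := by
  set C := Subgroup.centralizer (H : Set (Heis r))
  have hHC : Nat.card (shadow H) * Nat.card (shadow C) ≤ r ^ 2 := by
    refine (card_mul_card_le_of_pairing_eq_zero (commPairing r) (commPairing_injective r)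
      (shadow H) (shadow C) ?_).trans_eq (by rw [Nat.card_prod, Nat.card_zmod, sq])
    rintro _ ⟨a, ha, rfl⟩ _ ⟨b, hb, rfl⟩
    rw [commPairing_apply, sub_eq_zero]
    exact mul_comm_iff.mp (Subgroup.mem_centralizer_iff.mp hb a ha).symm
  calc Nat.card H * Nat.card C
      ≤ (Nat.card (shadow H) * r) * (Nat.card (shadow C) * r) :=
        Nat.mul_le_mul (card_le_card_shadow_mul H) (card_le_card_shadow_mul C)
    _ = Nat.card (shadow H) * Nat.card (shadow C) * r ^ 2 := by ring
    _ ≤ r ^ 2 * r ^ 2 := Nat.mul_le_mul_right _ hHC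
    _ = r ^ 4 := by ring

theorem mem_center_iff {r : ℕ} {a : Heis r} :
    a ∈ Subgroup.center (Heis r) ↔ a.x = 0 ∧ a.z = 0 := by
  simp only [Subgroup.mem_center_iff, mul_comm_iff]
  constructor
  · intro h
    exact ⟨by simpa using (h ⟨0, 0, 1⟩).symm, by simpa using h ⟨1, 0, 0⟩⟩
  · rintro ⟨hx, hz⟩ b
    rw [hx, hz, mul_zero, zero_mul]

theorem card_center (r : ℕ) : Nat.card (Subgroup.center (Heis r)) = r := by
  refine (Nat.card_congr (β := ZMod r) ?_).trans (Nat.card_zmod r)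
  exact
    { toFun := fun a => a.1.y
      invFun := fun y => ⟨⟨0, y, 0⟩, mem_center_iff.mpr ⟨rfl, rfl⟩⟩
      left_inv := fun a => by
        obtain ⟨hx, hz⟩ := mem_center_iff.mp a.2
        exact Subtype.ext (Heis.ext hx.symm rfl hz.symm)
      right_inv := fun _ => rfl }

end Heis

/-- the Chermak-Delgado measure of `𝓗(pⁿ)` is `p^(4n)`: the maximum of
`|H| * |C(H)|` over all subgroups `H ≤ 𝓗(pⁿ)` equals `p^(4n)`. -/
theorem statement19 (p n : ℕ) (hp : p.Prime) (hn : 1 ≤ n) :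
    IsGreatest (Set.range fun H : Subgroup (Heis (p ^ n)) =>
        Nat.card H * Nat.card (Subgroup.centralizer (H : Set (Heis (p ^ n)))))
      (p ^ (4 * n)) := by
  have : NeZero (p ^ n) := ⟨pow_ne_zero n hp.ne_zero⟩
  rw [mul_comm 4 n, pow_mul]
  constructor
  · refine ⟨⊤, ?_⟩
    simp only [Subgroup.coe_top, Subgroup.centralizer_univ, Subgroup.card_top, Heis.card,
      Heis.card_center]
    ring
  · rintro _ ⟨H, rfl⟩
    exact Heis.card_mul_card_centralizer_le H
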